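/- Define the linear functional 𝔖̃ : ℝ[X] → ℝ by 𝔖̃(f) = 𝔖(X·f), and define 𝔗̃_{2j}(X) = P_j(X²) and 𝔗̃_{2j+1}(X) = X·P̃_j(X²). Then each 𝔗̃_n is monic of degree n, 𝔖̃(𝔗̃_m·𝔗̃_n) = 0 whenever m ≠ n, and 𝔖̃(𝔗̃_n²) > 0 for every n ≥ 0. (This is the orthogonality of the polynomials produced by the extended Darboux transformation 𝔍 = 𝔏𝔘 ↦ 𝔘𝔏, whose associated function is λ·S(λ²).) -/

import Mathlib

/-!
Let `L f = ∫ f dμ` and `M f = 𝔖̃ f = 𝔖 (X f)`. Then `M (f(X²)) = L f` and `M (X f(X²)) = 0`, so `M`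
is the symmetrization of `L`, and the monic orthogonal polynomials of a symmetrization are
`P_j(X²)` and `X Q_j(X²)`, with `P` orthogonal for `L` and `Q` orthogonal for `f ↦ L (X f)`.

The kernel polynomials are such a `Q`: in `X P̃_j = P_{j+1} - c_j P_j` both terms on the right are
`L`-orthogonal to degrees below `j`. Pairing the same identity with `P̃_j` gives
`L (X P̃_j²) = -c_j L (P_j²)`, where `c_j = P_{j+1}(0) / P_j(0) < 0`.

Finally, changing from the monomial basis to `P` is unimodular and diagonalizes the Hankel matrix,
so `D_n = ∏_{i ≤ n} L (P_i²)`, and positivity of all `D_n` forces `L (P_n²) > 0`.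
-/

open Polynomial MeasureTheory

section CommRing

variable {R : Type*} [CommRing R]

/-- `P` is the sequence of monic orthogonal polynomials of the linear functional `L`. Orthogonality
of `P n` to lower degrees is tested on the powers of `X`. -/
structure IsMonicOrthogonal (L : R[X] →ₗ[R] R) (P : ℕ → R[X]) : Prop where
  monic : ∀ n, (P n).Monic
  natDegree_eq : ∀ n, (P n).natDegree = n
  map_mul_X_pow : ∀ n k, k < n → L (P n * X ^ k) = 0

/-- `M` is the symmetrization of `L`: its odd moments vanish and its even moments are the moments
of `L`. -/
structure IsSymmetrization (M L : R[X] →ₗ[R] R) : Prop where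
  map_X_pow_even : ∀ k, M (X ^ (2 * k)) = L (X ^ k)
  map_X_pow_odd : ∀ k, M (X ^ (2 * k + 1)) = 0

variable {L M : R[X] →ₗ[R] R} {P Q T : ℕ → R[X]} {n : ℕ}

namespace IsMonicOrthogonal

lemma map_mul_sum_range (hP : IsMonicOrthogonal L P) (a : ℕ → R) :
    L (P n * ∑ k ∈ Finset.range n, C (a k) * X ^ k) = 0 := by
  rw [Finset.mul_sum, map_sum]
  refine Finset.sum_eq_zero fun k hk ↦ ?_
  rw [mul_left_comm, ← smul_eq_C_mul, map_smul,
    hP.map_mul_X_pow n k (Finset.mem_range.mp hk), smul_zero]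

lemma map_mul_of_natDegree_lt (hP : IsMonicOrthogonal L P) {q : R[X]} (hq : q.natDegree < n) :
    L (P n * q) = 0 := by
  rw [q.as_sum_range_C_mul_X_pow' hq, hP.map_mul_sum_range]

lemma map_mul_monic (hP : IsMonicOrthogonal L P) {q : R[X]} (hq : q.Monic)
    (hqn : q.natDegree = n) : L (P n * q) = L (P n * X ^ n) := by
  rw [hq.as_sum, hqn, mul_add, map_add, hP.map_mul_sum_range, add_zero]

lemma map_mul_of_ne (hP : IsMonicOrthogonal L P) {m : ℕ} (hmn : m ≠ n) :
    L (P m * P n) = 0 := by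
  rcases hmn.lt_or_gt with h | h
  · rw [mul_comm]
    exact hP.map_mul_of_natDegree_lt (by rwa [hP.natDegree_eq])
  · exact hP.map_mul_of_natDegree_lt (by rwa [hP.natDegree_eq])

open Matrix in
theorem det_hankel (hP : IsMonicOrthogonal L P) (n : ℕ) :
    (of fun i k : Fin n ↦ L (X ^ (i.1 + k.1))).det = ∏ i : Fin n, L (P i * P i) := by
  let A : Matrix (Fin n) (Fin n) R := of fun i k ↦ (P k).coeff i
  let H : Matrix (Fin n) (Fin n) R := of fun i k ↦ L (X ^ (i.1 + k.1))
  have det_A : A.det = 1 :=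
    det_matrixOfPolynomials (fun k : Fin n ↦ P k) (fun k ↦ hP.natDegree_eq k) fun k ↦ hP.monic k
  have expansion (k : Fin n) : P k = ∑ i : Fin n, A i k • X ^ i.1 := by
    have hk : (P k).natDegree < n := by rw [hP.natDegree_eq]; exact k.2
    rw [(P k).as_sum_range_C_mul_X_pow' hk, Finset.sum_range]
    simp only [A, of_apply, smul_eq_C_mul]
  have gram : Aᵀ * H * A = diagonal fun i : Fin n ↦ L (P i * P i) := by
    trans of fun i k : Fin n ↦ L (P i * P k)
    · ext i k
      simp only [mul_apply, transpose_apply, of_apply, H]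
      rw [expansion i, expansion k]
      simp only [Finset.mul_sum, Finset.sum_mul, map_sum, smul_mul_smul_comm, ← pow_add, map_smul,
        smul_eq_mul]
      exact Finset.sum_congr rfl fun _ _ ↦ Finset.sum_congr rfl fun _ _ ↦ by ring
    · ext i k
      rcases eq_or_ne i k with rfl | hik
      · simp
      · simp [hik, hP.map_mul_of_ne (Fin.val_ne_of_ne hik)]
  calc H.det = (Aᵀ * H * A).det := by simp [det_A]
    _ = ∏ i : Fin n, L (P i * P i) := by rw [gram, det_diagonal]

section Christoffel

variable {u : R[X]} {c : ℕ → R}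

theorem christoffel (hP : IsMonicOrthogonal L P) (hu : u.Monic) (hu₁ : u.natDegree = 1)
    (hQ : ∀ n, u * Q n = P (n + 1) - C (c n) * P n) :
    IsMonicOrthogonal (L ∘ₗ LinearMap.mulLeft R u) Q := by
  have natDegree_lt (n : ℕ) : (C (c n) * P n).natDegree < (P (n + 1)).natDegree := by
    calc (C (c n) * P n).natDegree ≤ (P n).natDegree := natDegree_C_mul_le _ _
      _ < (P (n + 1)).natDegree := by simp only [hP.natDegree_eq, n.lt_succ_self]
  have monic_Q (n : ℕ) : (Q n).Monic := by
    refine hu.of_mul_monic_left ?_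
    rw [hQ]
    exact (hP.monic (n + 1)).sub_of_left (degree_lt_degree (natDegree_lt n))
  refine ⟨monic_Q, fun n ↦ ?_, fun n k hk ↦ ?_⟩
  · have natDegree_mul : (u * Q n).natDegree = n + 1 := by
      rw [hQ, natDegree_sub_eq_left_of_natDegree_lt (natDegree_lt n), hP.natDegree_eq]
    rw [hu.natDegree_mul (monic_Q n), hu₁] at natDegree_mul
    lia
  · rw [LinearMap.comp_apply, LinearMap.mulLeft_apply, ← mul_assoc, hQ, sub_mul, map_sub,
      hP.map_mul_X_pow _ _ (hk.trans n.lt_succ_self), mul_assoc, ← smul_eq_C_mul, map_smul,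
      hP.map_mul_X_pow _ _ hk, smul_zero, sub_zero]

theorem christoffel_map_mul_self (hP : IsMonicOrthogonal L P) (hu : u.Monic)
    (hu₁ : u.natDegree = 1) (hQ : ∀ n, u * Q n = P (n + 1) - C (c n) * P n) (n : ℕ) :
    L (u * (Q n * Q n)) = -c n * L (P n * P n) := by
  have hQ' := hP.christoffel hu hu₁ hQ
  have map_succ : L (P (n + 1) * Q n) = 0 :=
    hP.map_mul_of_natDegree_lt (by rw [hQ'.natDegree_eq]; exact n.lt_succ_self)
  have map_self : L (P n * Q n) = L (P n * P n) := by
    rw [hP.map_mul_monic (hQ'.monic n) (hQ'.natDegree_eq n),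
      hP.map_mul_monic (hP.monic n) (hP.natDegree_eq n)]
  rw [← mul_assoc, hQ, sub_mul, map_sub, map_succ, mul_assoc, ← smul_eq_C_mul, map_smul, map_self,
    smul_eq_mul, zero_sub, neg_mul]

end Christoffel

end IsMonicOrthogonal

namespace IsSymmetrization

lemma map_comp_X_sq (h : IsSymmetrization M L) (f : R[X]) : M (f.comp (X ^ 2)) = L f := by
  have : M ∘ₗ (expand R 2).toLinearMap = L := by
    ext k
    simpa [X_pow_eq_monomial, mul_comm 2] using h.map_X_pow_even k
  exact LinearMap.congr_fun this f

lemma map_X_mul_comp_X_sq (h : IsSymmetrization M L) (f : R[X]) : M (X * f.comp (X ^ 2)) = 0 := by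
  have : M ∘ₗ LinearMap.mulLeft R X ∘ₗ (expand R 2).toLinearMap = 0 := by
    ext k
    simpa [X_pow_eq_monomial, mul_comm 2] using h.map_X_pow_odd k
  simpa [expand_eq_comp_X_pow] using LinearMap.congr_fun this f

lemma map_even_mul_even (h : IsSymmetrization M L) (f g : R[X]) :
    M (f.comp (X ^ 2) * g.comp (X ^ 2)) = L (f * g) := by
  rw [← mul_comp, h.map_comp_X_sq]

lemma map_even_mul_odd (h : IsSymmetrization M L) (f g : R[X]) :
    M (f.comp (X ^ 2) * (X * g.comp (X ^ 2))) = 0 := by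
  rw [mul_left_comm, ← mul_comp, h.map_X_mul_comp_X_sq]

lemma map_odd_mul_odd (h : IsSymmetrization M L) (f g : R[X]) :
    M (X * f.comp (X ^ 2) * (X * g.comp (X ^ 2))) = L (X * (f * g)) := by
  rw [← h.map_comp_X_sq, mul_comp, mul_comp, X_comp]
  congr 1
  ring

theorem isMonicOrthogonal [Nontrivial R] (h : IsSymmetrization M L) (hP : IsMonicOrthogonal L P)
    (hQ : IsMonicOrthogonal (L ∘ₗ LinearMap.mulLeft R X) Q)
    (hT_even : ∀ n, T (2 * n) = (P n).comp (X ^ 2))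
    (hT_odd : ∀ n, T (2 * n + 1) = X * (Q n).comp (X ^ 2)) : IsMonicOrthogonal M T := by
  have X_pow_even (i : ℕ) : (X ^ (2 * i) : R[X]) = (X ^ i).comp (X ^ 2) := by
    rw [X_pow_comp, pow_mul]
  have X_pow_odd (i : ℕ) : (X ^ (2 * i + 1) : R[X]) = X * (X ^ i).comp (X ^ 2) := by
    rw [pow_succ', X_pow_even]
  have monic_comp {f : R[X]} (hf : f.Monic) : (f.comp (X ^ 2)).Monic := by
    simpa only [expand_eq_comp_X_pow] using hf.expand two_pos
  have natDegree_comp (f : R[X]) : (f.comp (X ^ 2)).natDegree = f.natDegree * 2 := by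
    rw [← expand_eq_comp_X_pow, natDegree_expand]
  refine ⟨fun n ↦ ?_, fun n ↦ ?_, fun n k hk ↦ ?_⟩
  · obtain ⟨j, rfl | rfl⟩ := n.even_or_odd'
    · exact hT_even j ▸ monic_comp (hP.monic j)
    · exact hT_odd j ▸ monic_X.mul (monic_comp (hQ.monic j))
  · obtain ⟨j, rfl | rfl⟩ := n.even_or_odd'
    · rw [hT_even, natDegree_comp, hP.natDegree_eq, mul_comm]
    · rw [hT_odd, natDegree_X_mul (monic_comp (hQ.monic j)).ne_zero, natDegree_comp,
        hQ.natDegree_eq, mul_comm]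
  · obtain ⟨j, rfl | rfl⟩ := n.even_or_odd' <;> obtain ⟨i, rfl | rfl⟩ := k.even_or_odd'
    · rw [hT_even, X_pow_even, h.map_even_mul_even, hP.map_mul_X_pow j i (by lia)]
    · rw [hT_even, X_pow_odd, h.map_even_mul_odd]
    · rw [hT_odd, X_pow_even, mul_comm, h.map_even_mul_odd]
    · rw [hT_odd, X_pow_odd, h.map_odd_mul_odd]
      exact hQ.map_mul_X_pow j i (by lia)

end IsSymmetrization

end CommRing

section OrderedField

variable {K : Type*} [Field K] [LinearOrder K] [IsStrictOrderedRing K]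

lemma IsMonicOrthogonal.map_mul_self_pos {L : K[X] →ₗ[K] K} {P : ℕ → K[X]}
    (hP : IsMonicOrthogonal L P)
    (hdet : ∀ n, 0 < (Matrix.of fun i k : Fin (n + 1) ↦ L (X ^ (i.1 + k.1))).det) (n : ℕ) :
    0 < L (P n * P n) := by
  have prod_pos : ∀ m, 0 < ∏ i : Fin m, L (P i * P i)
    | 0 => by simp
    | m + 1 => hP.det_hankel (m + 1) ▸ hdet m
  have h := prod_pos (n + 1)
  rw [Fin.prod_univ_castSucc] at h
  exact pos_of_mul_pos_right h (prod_pos n).le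

lemma div_neg_of_alternating {n : ℕ} {x y : K} (hx : 0 < (-1) ^ n * x)
    (hy : 0 < (-1) ^ (n + 1) * y) : y / x < 0 := by
  have : y / x = -((-1) ^ (n + 1) * y / ((-1) ^ n * x)) := by
    rw [pow_succ, mul_assoc, mul_div_mul_left _ _ (pow_ne_zero n (by simp)), neg_one_mul, neg_div,
      neg_neg]
  rw [this]
  exact neg_neg_of_pos (div_pos hy hx)

theorem stmt_8_general (L : K[X] →ₗ[K] K) (s : ℕ → K) (hs : ∀ j, s j = L (X ^ j))
    (hDpos : ∀ n, 0 < (Matrix.of fun i k : Fin (n + 1) ↦ s (i.1 + k.1)).det)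
    (P : ℕ → K[X]) (hP : IsMonicOrthogonal L P)
    (S : K[X] →ₗ[K] K) (hSeven : ∀ j, S (X ^ (2 * j)) = 0)
    (hSodd : ∀ j, S (X ^ (2 * j + 1)) = s j)
    (hP0 : ∀ j, 0 < (-1) ^ j * (P j).eval 0)
    (Pt : ℕ → K[X])
    (hPt : ∀ j, X * Pt j = P (j + 1) - C ((P (j + 1)).eval 0 / (P j).eval 0) * P j)
    (Tt : ℕ → K[X]) (hTteven : ∀ j, Tt (2 * j) = (P j).comp (X ^ 2))
    (hTtodd : ∀ j, Tt (2 * j + 1) = X * (Pt j).comp (X ^ 2)) :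
    (∀ n, (Tt n).Monic ∧ (Tt n).natDegree = n) ∧
    (∀ m n, m ≠ n → S (X * (Tt m * Tt n)) = 0) ∧
    (∀ n, 0 < S (X * (Tt n * Tt n))) := by
  have hsymm : IsSymmetrization (S ∘ₗ LinearMap.mulLeft K X) L :=
    ⟨fun k ↦ by simp [← pow_succ', hSodd, hs],
      fun k ↦ by simpa [← pow_succ', mul_add, add_assoc] using hSeven (k + 1)⟩
  have hT := hsymm.isMonicOrthogonal hP (hP.christoffel monic_X natDegree_X hPt) hTteven hTtodd
  have hpos := hP.map_mul_self_pos (by simpa only [hs] using hDpos)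
  refine ⟨fun n ↦ ⟨hT.monic n, hT.natDegree_eq n⟩, fun _ _ ↦ hT.map_mul_of_ne, fun n ↦ ?_⟩
  change 0 < (S ∘ₗ LinearMap.mulLeft K X) (Tt n * Tt n)
  obtain ⟨j, rfl | rfl⟩ := n.even_or_odd'
  · rw [hTteven, hsymm.map_even_mul_even]
    exact hpos j
  · rw [hTtodd, hsymm.map_odd_mul_odd, hP.christoffel_map_mul_self monic_X natDegree_X hPt]
    exact mul_pos (neg_pos.mpr (div_neg_of_alternating (hP0 j) (hP0 (j + 1)))) (hpos j)

end OrderedField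

section Moments

variable {μ : Measure ℝ}

lemma integrable_eval_of_integrable_pow (hint : ∀ j : ℕ, Integrable (fun t : ℝ ↦ t ^ j) μ)
    (f : ℝ[X]) : Integrable (fun t ↦ f.eval t) μ := by
  simp only [eval_eq_sum_range]
  exact integrable_finsetSum _ fun k _ ↦ (hint k).const_mul _

/-- Integration of polynomials against a measure with finite moments, as a linear functional. -/
noncomputable def momentFunctional (hint : ∀ j : ℕ, Integrable (fun t : ℝ ↦ t ^ j) μ) :
    ℝ[X] →ₗ[ℝ] ℝ where
  toFun f := ∫ t, f.eval t ∂μ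
  map_add' f g := by
    simp only [eval_add]
    exact integral_add (integrable_eval_of_integrable_pow hint f)
      (integrable_eval_of_integrable_pow hint g)
  map_smul' a f := by simp only [eval_smul, integral_smul, RingHom.id_apply]

lemma momentFunctional_apply (hint : ∀ j : ℕ, Integrable (fun t : ℝ ↦ t ^ j) μ) (f : ℝ[X]) :
    momentFunctional hint f = ∫ t, f.eval t ∂μ :=
  rfl

end Moments

/-- with `𝔖̃(f) = 𝔖(X·f)`, `𝔗̃_{2j} = P_j(X²)`, `𝔗̃_{2j+1} = X·P̃_j(X²)`,
every `𝔗̃_n` is monic of degree `n`, `𝔖̃(𝔗̃_m·𝔗̃_n) = 0` for `m ≠ n`, and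
`𝔖̃(𝔗̃_n²) > 0` for every `n`. -/
theorem stmt_8
    (μ : Measure ℝ) [IsProbabilityMeasure μ]
    (hsupp : ∀ᵐ t ∂μ, 0 ≤ t)
    (hint : ∀ j : ℕ, Integrable (fun t : ℝ => t ^ j) μ)
    (s : ℕ → ℝ) (hs : ∀ j, s j = ∫ t, t ^ j ∂μ)
    (hDpos : ∀ n : ℕ, 0 < (Matrix.of fun i k : Fin (n + 1) => s (i.1 + k.1)).det)
    (P : ℕ → Polynomial ℝ)
    (hPmonic : ∀ j, (P j).Monic) (hPdeg : ∀ j, (P j).natDegree = j)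
    (hPorth : ∀ j k : ℕ, k < j → ∫ t, (P j).eval t * t ^ k ∂μ = 0)
    (S : Polynomial ℝ →ₗ[ℝ] ℝ)
    (hSeven : ∀ j : ℕ, S (X ^ (2 * j)) = 0)
    (hSodd : ∀ j : ℕ, S (X ^ (2 * j + 1)) = s j)
    (hP0 : ∀ j : ℕ, 0 < (-1 : ℝ) ^ j * (P j).eval 0)
    (Pt : ℕ → Polynomial ℝ)
    (hPt : ∀ j, X * Pt j = P (j + 1) - C ((P (j + 1)).eval 0 / (P j).eval 0) * P j)
    (Tt : ℕ → Polynomial ℝ)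
    (hTteven : ∀ j, Tt (2 * j) = (P j).comp (X ^ 2))
    (hTtodd : ∀ j, Tt (2 * j + 1) = X * (Pt j).comp (X ^ 2)) :
    (∀ n : ℕ, (Tt n).Monic ∧ (Tt n).natDegree = n) ∧
    (∀ m n : ℕ, m ≠ n → S (X * (Tt m * Tt n)) = 0) ∧
    (∀ n : ℕ, 0 < S (X * (Tt n * Tt n))) := by
  exact stmt_8_general (momentFunctional hint) s (by simpa [momentFunctional_apply] using hs) hDpos
    P ⟨hPmonic, hPdeg, by simpa [momentFunctional_apply] using hPorth⟩ S hSeven hSodd hP0 Pt hPt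
    Tt hTteven hTtodd
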